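/- arXiv:1206.6139 — 3 statements merged into one kernel-verified Lean document; each statement's English description precedes it below -/
import Mathlib

section
/- Let m be a squarefree positive integer with gcd(m, 30) = 1, and let f : (Z/mZ)* → [0,1] be a function with ∑_{x ∈ (Z/mZ)*} f(x) > (5/8)·φ(m). Then for every x ∈ Z/mZ there exist units a, b, c ∈ (Z/mZ)* with x = a + b + c such that f(a)f(b) + f(b)f(c) + f(c)f(a) > (5/8)(f(a) + f(b) + f(c)). -/
/-!
After the substitution `F = (16 f - 5) / 5` and a harmless clipping from below, the claim reads: if
`F` takes values in `[-23/55, 11/5]` and has mean greater than `1`, then every `x` is a sum of three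
units `a, b, c` with `e₂(F a, F b, F c) > 3`, where `e₂(x, y, z) = xy + yz + zx`.

This form is inductive. Let `R → S` be a ring homomorphism under which `Rˣ` splits into fibres over
`Sˣ`, and apply the claim for `S` to the means of `F` over the fibres; it remains to pass from three
fibre means with `e₂ > 3` to points of these fibres with prescribed sum and `e₂ > 3`.

* When `R → S` is `ℤ/pmℤ → ℤ/mℤ` with `p ∣ m`, the fibres are cosets of the kernel, and averaging
  `e₂` over the triples in these cosets with the prescribed sum suffices.
* When `R = ℤ/pℤ × S`, each fibre is `(ℤ/pℤ)ˣ`. Sort the three functions decreasingly as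
  `X, Y, Z` on `{0, …, n - 1}`, `n = p - 1`. By Cauchy–Davenport, if no triple works then
  `e₂(X i, Y j, Z k) ≤ 3` whenever `i + j + k ≥ n`. Now average over `i + j + k ≡ 0 mod n`: only
  `(0, 0, 0)` can exceed `3`, and its excess is compensated by seven triples with `i, j, k ≥ n / 2`,
  where `e₂` is essentially at most its value at `(n / 2, n / 2, n / 2)`.
-/

open Finset
open scoped BigOperators Pointwise

/-- The second elementary symmetric polynomial of three real numbers. -/
def pairSum (x y z : ℝ) : ℝ := x * y + y * z + z * x

section PairSum

variable {q B x y z u v w : ℝ}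

lemma pairSum_rotate (x y z : ℝ) : pairSum x y z = pairSum y z x := by
  unfold pairSum
  ring

lemma pairSum_mono (hyz : 0 ≤ y + z) (hzx : 0 ≤ z + x) (hxy : 0 ≤ x + y)
    (hxu : x ≤ u) (hyv : y ≤ v) (hzw : z ≤ w) : pairSum x y z ≤ pairSum u v w := by
  have replace_x : 0 ≤ (u - x) * (y + z) := mul_nonneg (by linarith) hyz
  have replace_y : 0 ≤ (v - y) * (z + u) := mul_nonneg (by linarith) (by linarith)
  have replace_z : 0 ≤ (w - z) * (u + v) := mul_nonneg (by linarith) (by linarith)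
  unfold pairSum
  linarith

lemma pairSum_le_of_add_nonpos (hx : -q ≤ x) (hy : -q ≤ y) (hz : -q ≤ z) (hyz : y + z ≤ 0) :
    pairSum x y z ≤ 3 * q ^ 2 := by
  have replace_x : 0 ≤ (x + q) * -(y + z) := mul_nonneg (by linarith) (by linarith)
  have bound : (q - y) * (q - z) ≤ (2 * q) * (2 * q) :=
    mul_le_mul (by linarith) (by linarith) (by linarith) (by linarith)
  unfold pairSum
  linarith

lemma pairSum_le_max (hx : -q ≤ x) (hy : -q ≤ y) (hz : -q ≤ z)
    (hxu : x ≤ u) (hyv : y ≤ v) (hzw : z ≤ w) :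
    pairSum x y z ≤ max (pairSum u v w) (3 * q ^ 2) := by
  rcases le_total (y + z) 0 with hyz | hyz
  · exact le_max_of_le_right (pairSum_le_of_add_nonpos hx hy hz hyz)
  rcases le_total (z + x) 0 with hzx | hzx
  · rw [pairSum_rotate x]
    exact le_max_of_le_right (pairSum_le_of_add_nonpos hy hz hx hzx)
  rcases le_total (x + y) 0 with hxy | hxy
  · rw [← pairSum_rotate z]
    exact le_max_of_le_right (pairSum_le_of_add_nonpos hz hx hy hxy)
  exact le_max_of_le_left (pairSum_mono hyz hzx hxy hxu hyv hzw)

lemma add_pos_of_lt_pairSum (hx : -q ≤ x) (hy : -q ≤ y) (hz : -q ≤ z)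
    (h : 3 * q ^ 2 < pairSum x y z) : 0 < y + z := by
  contrapose! h
  exact pairSum_le_of_add_nonpos hx hy hz h

lemma pairSum_neg_le (hqB : 3 * q ≤ B) (hy : y ∈ Set.Icc (-q) B) (hz : z ∈ Set.Icc (-q) B) :
    pairSum (-q) y z ≤ B ^ 2 - 2 * q * B := by
  have hy' : |y - q| ≤ B - q := abs_le.2 ⟨by linarith [hy.1], by linarith [hy.2]⟩
  have hz' : |z - q| ≤ B - q := abs_le.2 ⟨by linarith [hz.1], by linarith [hz.2]⟩
  calc pairSum (-q) y z = (y - q) * (z - q) - q ^ 2 := by unfold pairSum; ring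
    _ ≤ |y - q| * |z - q| - q ^ 2 := by rw [← abs_mul]; gcongr; exact le_abs_self _
    _ ≤ (B - q) * (B - q) - q ^ 2 := by gcongr; exact (abs_nonneg _).trans hy'
    _ = B ^ 2 - 2 * q * B := by ring

lemma schur_of_le {a b c : ℝ} (hc : 0 ≤ c) (hca : c ≤ a) (hcb : c ≤ b) :
    0 ≤ a * (a - b) * (a - c) + b * (b - c) * (b - a) + c * (c - a) * (c - b) := by
  have hab : 0 ≤ (a - b) ^ 2 * (a + b - c) := mul_nonneg (sq_nonneg _) (by linarith)
  have habc : 0 ≤ c * ((a - c) * (b - c)) :=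
    mul_nonneg hc (mul_nonneg (by linarith) (by linarith))
  linarith

lemma schur {a b c : ℝ} (ha : 0 ≤ a) (hb : 0 ≤ b) (hc : 0 ≤ c) :
    0 ≤ a * (a - b) * (a - c) + b * (b - c) * (b - a) + c * (c - a) * (c - b) := by
  rcases le_total a b with hab | hba
  · rcases le_total a c with hac | hca
    · linarith [schur_of_le ha hab hac]
    · exact schur_of_le hc hca (hca.trans hab)
  · rcases le_total b c with hbc | hcb
    · linarith [schur_of_le hb hbc hba]
    · exact schur_of_le hc (hcb.trans hba) hcb

-- This is Schur's inequality for `y + z`, `z + x`, `x + y`.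
lemma add_mul_pairSum_le (hyz : 0 ≤ y + z) (hzx : 0 ≤ z + x) (hxy : 0 ≤ x + y) :
    8 * ((x + y + z) * pairSum x y z) ≤ 9 * ((y + z) * (z + x) * (x + y)) := by
  have h := schur hyz hzx hxy
  unfold pairSum
  linarith

lemma pairSum_le_mul_of_mul_le {a b c d e f s k : ℝ} (ha : 0 < a) (hb : 0 < b) (hc : 0 < c)
    (hd : 0 ≤ d) (he : 0 ≤ e) (hf : 0 ≤ f) (had : d * a ≤ s) (hbe : e * b ≤ s) (hcf : f * c ≤ s)
    (hs : s * (a + b + c) ≤ k * (a * b * c)) : pairSum d e f ≤ k * s := by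
  have hs₀ : 0 ≤ s := (mul_nonneg hd ha.le).trans had
  calc pairSum d e f ≤ pairSum (s / a) (s / b) (s / c) :=
        pairSum_mono (by positivity) (by positivity) (by positivity)
          ((le_div_iff₀ ha).2 had) ((le_div_iff₀ hb).2 hbe) ((le_div_iff₀ hc).2 hcf)
    _ = s * (a + b + c) / (a * b * c) * s := by unfold pairSum; field_simp; ring
    _ ≤ k * s := by gcongr; exact (div_le_iff₀ (by positivity)).2 hs

lemma pairSum_add_seven_mul_le (hvw : 0 < v + w) (hwu : 0 < w + u) (huv : 0 < u + v)
    (hux : u ≤ x) (hvy : v ≤ y) (hwz : w ≤ z)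
    (hx : pairSum x v w ≤ 3) (hy : pairSum u y w ≤ 3) (hz : pairSum u v z ≤ 3)
    (hone : 1 ≤ pairSum u v w) : pairSum x y z + 7 * pairSum u v w ≤ 24 := by
  set P := pairSum u v w with hP
  have expand : pairSum x y z = P + (x - u) * (v + w) + (y - v) * (w + u) + (z - w) * (u + v) +
      pairSum (x - u) (y - v) (z - w) := by
    unfold pairSum at hP ⊢
    linarith
  have bound_x : (x - u) * (v + w) ≤ 3 - P := by unfold pairSum at hP hx; linarith
  have bound_y : (y - v) * (w + u) ≤ 3 - P := by unfold pairSum at hP hy; linarith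
  have bound_z : (z - w) * (u + v) ≤ 3 - P := by unfold pairSum at hP hz; linarith
  have cubic : (3 - P) * ((v + w) + (w + u) + (u + v)) ≤
      5 * ((v + w) * (w + u) * (u + v)) := by
    have hschur := add_mul_pairSum_le hvw.le hwu.le huv.le
    have hsum : 0 ≤ (u + v + w) * (P - 1) := mul_nonneg (by linarith) (by linarith)
    linarith
  have bound_increments : pairSum (x - u) (y - v) (z - w) ≤ 5 * (3 - P) :=
    pairSum_le_mul_of_mul_le hvw hwu huv (by linarith) (by linarith) (by linarith)
      bound_x bound_y bound_z cubic
  linarith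

lemma pairSum_add_seven_mul_max_le (hq : 3 * q ^ 2 < 1) (hB : 3 * B ^ 2 ≤ 17)
    (hu : -q ≤ u) (hv : -q ≤ v) (hw : -q ≤ w) (hux : u ≤ x) (hvy : v ≤ y) (hwz : w ≤ z)
    (hxB : x ≤ B) (hyB : y ≤ B) (hzB : z ≤ B)
    (hx : pairSum x v w ≤ 3) (hy : pairSum u y w ≤ 3) (hz : pairSum u v z ≤ 3) :
    pairSum x y z + 7 * max (pairSum u v w) 1 ≤ 24 := by
  rcases le_total 1 (pairSum u v w) with hone | hone
  · rw [max_eq_left hone]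
    refine pairSum_add_seven_mul_le ?_ ?_ ?_ hux hvy hwz hx hy hz hone
    · exact add_pos_of_lt_pairSum hu hv hw (by linarith)
    · exact add_pos_of_lt_pairSum hv hw hu (by rw [← pairSum_rotate]; linarith)
    · exact add_pos_of_lt_pairSum hw hu hv (by rw [pairSum_rotate]; linarith)
  · have hBBB : pairSum B B B ≤ 17 := by unfold pairSum; linarith
    have hxyz : pairSum x y z ≤ max (pairSum B B B) (3 * q ^ 2) :=
      pairSum_le_max (hu.trans hux) (hv.trans hvy) (hw.trans hwz) hxB hyB hzB
    rw [max_eq_right hone]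
    linarith [hxyz.trans (max_le hBBB (by linarith))]

end PairSum

section Averages

variable {ι : Type*} [Fintype ι]

lemma expect_mem_Icc [Nonempty ι] {a b : ℝ} {F : ι → ℝ} (hF : ∀ i, F i ∈ Set.Icc a b) :
    𝔼 i, F i ∈ Set.Icc a b :=
  ⟨le_expect univ_nonempty fun i _ ↦ (hF i).1, expect_le univ_nonempty fun i _ ↦ (hF i).2⟩

lemma expect_le_of_compensating_set {T : ι → ℝ} {t M : ℝ} {i₀ : ι} {S : Finset ι} (hi₀ : i₀ ∉ S)
    (hT : ∀ i ≠ i₀, T i ≤ t) (hS : ∀ i ∈ S, T i ≤ M) (hM : T i₀ + #S * M ≤ (#S + 1) * t) :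
    𝔼 i, T i ≤ t := by
  classical
  have : Nonempty ι := ⟨i₀⟩
  have on_S : #S * (t - M) ≤ ∑ i ∈ S, (t - T i) := by
    rw [← nsmul_eq_mul]
    exact card_nsmul_le_sum _ _ _ fun i hi ↦ by linarith [hS i hi]
  have off_S : ∑ i ∈ insert i₀ S, (t - T i) ≤ ∑ i, (t - T i) :=
    sum_le_sum_of_subset_of_nonneg (subset_univ _) fun i _ hi ↦
      sub_nonneg.2 (hT i fun h ↦ hi (h ▸ mem_insert_self i₀ S))
  rw [sum_insert hi₀] at off_S
  have deficit_nonneg : 0 ≤ 𝔼 i, (t - T i) := by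
    rw [Fintype.expect_eq_sum_div_card]
    exact div_nonneg (by linarith) (by positivity)
  rwa [expect_sub_distrib, Fintype.expect_const, sub_nonneg] at deficit_nonneg

end Averages

section Group

variable {G : Type*} [AddCommGroup G] [Fintype G]

lemma expect_pairSum (X Y Z : G → ℝ) (x : G) :
    𝔼 p : G × G, pairSum (X p.1) (Y p.2) (Z (x - p.1 - p.2)) =
      pairSum (𝔼 g, X g) (𝔼 g, Y g) (𝔼 g, Z g) := by
  have shift (y : G) : 𝔼 g, Z (y - g) = 𝔼 g, Z g :=
    Fintype.expect_equiv (Equiv.subLeft y) _ _ fun _ ↦ rfl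
  have hXY : 𝔼 p : G × G, X p.1 * Y p.2 = (𝔼 g, X g) * 𝔼 g, Y g := by
    rw [Fintype.expect_mul_expect, ← univ_product_univ, expect_product]
  have hYZ : 𝔼 p : G × G, Y p.2 * Z (x - p.1 - p.2) = (𝔼 g, Y g) * 𝔼 g, Z g := by
    rw [← univ_product_univ, expect_product, expect_comm, expect_mul]
    simp only [sub_right_comm x, ← mul_expect, shift]
  have hZX : 𝔼 p : G × G, Z (x - p.1 - p.2) * X p.1 = (𝔼 g, Z g) * 𝔼 g, X g := by
    rw [← univ_product_univ, expect_product, mul_expect]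
    simp only [← expect_mul, shift]
  simp only [pairSum, expect_add_distrib, hXY, hYZ, hZX]

lemma exists_add_eq_and_lt_pairSum {X Y Z : G → ℝ} {t : ℝ}
    (h : t < pairSum (𝔼 g, X g) (𝔼 g, Y g) (𝔼 g, Z g)) (x : G) :
    ∃ a b c, a + b + c = x ∧ t < pairSum (X a) (Y b) (Z c) := by
  rw [← expect_pairSum X Y Z x] at h
  obtain ⟨⟨a, b⟩, -, hab⟩ := exists_lt_of_lt_expect univ_nonempty h
  exact ⟨a, b, x - a - b, by abel, hab⟩

end Group

section Sorted

lemma fin_add_add_eq_zero_iff {n : ℕ} [NeZero n] (i j k : Fin n) :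
    i + j + k = 0 ↔ n ∣ (i : ℕ) + j + k := by
  simp only [Fin.ext_iff, Fin.val_add, Nat.mod_add_mod, Fin.val_zero, Nat.dvd_iff_mod_eq_zero]

lemma le_val_add_add_of_add_eq_zero {n : ℕ} [NeZero n] {i j k : Fin n} (hsum : i + j + k = 0)
    (hne : (i, j) ≠ 0) : n ≤ (i : ℕ) + j + k := by
  refine Nat.le_of_dvd (Nat.pos_of_ne_zero fun h ↦ hne ?_) ((fin_add_add_eq_zero_iff i j k).1 hsum)
  simp only [Prod.mk_eq_zero, Fin.ext_iff, Fin.val_zero]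
  omega

lemma exists_seven_pairs_add_le {m : ℕ} (hm : 3 ≤ m) :
    ∃ S : Finset (Fin m × Fin m), #S = 7 ∧
      ∀ p ∈ S, 0 < (p.1 : ℕ) + p.2 ∧ (p.1 : ℕ) + p.2 ≤ m := by
  obtain ⟨k, rfl⟩ : ∃ k, m = k + 3 := ⟨m - 3, by omega⟩
  refine ⟨{(0, 1), (1, 0), (0, Fin.last _), (Fin.last _, 0), (1, Fin.last _), (Fin.last _, 1),
    (1, 1)}, ?_, ?_⟩
  · simp [Fin.ext_iff]
  · simp only [mem_insert, mem_singleton]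
    rintro p (rfl | rfl | rfl | rfl | rfl | rfl | rfl) <;> simp
    omega

lemma exists_seven_upper_zero_sum_pairs {m : ℕ} [NeZero (m + m)] (hm : 3 ≤ m) :
    ∃ S : Finset (Fin (m + m) × Fin (m + m)), #S = 7 ∧
      ∀ p ∈ S, m ≤ (p.1 : ℕ) ∧ m ≤ (p.2 : ℕ) ∧ m ≤ ((0 - p.1 - p.2 : Fin (m + m)) : ℕ) := by
  obtain ⟨S, hS, hle⟩ := exists_seven_pairs_add_le hm
  refine ⟨S.map ((Fin.natAddEmb m).prodMap (Fin.natAddEmb m)), by rw [card_map, hS], ?_⟩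
  simp only [mem_map]
  rintro _ ⟨⟨i, j⟩, hij, rfl⟩
  obtain ⟨hpos, hsum⟩ : 0 < (i : ℕ) + j ∧ (i : ℕ) + j ≤ m := hle _ hij
  let k : Fin m := ⟨m - (i + j), by omega⟩
  have third : 0 - Fin.natAdd m i - Fin.natAdd m j = Fin.natAdd m k := by
    have hzero : Fin.natAdd m i + Fin.natAdd m j + Fin.natAdd m k = 0 :=
      (fin_add_add_eq_zero_iff _ _ _).2 ⟨2, by simp only [Fin.val_natAdd, k]; omega⟩
    rw [← hzero]
    abel
  have upper (l : Fin m) : m ≤ (Fin.natAdd m l : ℕ) := Nat.le_add_right m l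
  exact ⟨upper i, upper j, (upper k).trans_eq (congrArg Fin.val third).symm⟩

lemma pairSum_expect_le_of_antitone {q B : ℝ} (hq : 3 * q ^ 2 < 1) (hB : 3 * B ^ 2 ≤ 17)
    {m : ℕ} (hm : 3 ≤ m) {X Y Z : Fin (m + m) → ℝ}
    (hX : Antitone X) (hY : Antitone Y) (hZ : Antitone Z)
    (hXqB : ∀ i, X i ∈ Set.Icc (-q) B) (hYqB : ∀ i, Y i ∈ Set.Icc (-q) B)
    (hZqB : ∀ i, Z i ∈ Set.Icc (-q) B)
    (h : ∀ i j k : Fin (m + m), m + m ≤ (i : ℕ) + j + k → pairSum (X i) (Y j) (Z k) ≤ 3) :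
    pairSum (𝔼 i, X i) (𝔼 i, Y i) (𝔼 i, Z i) ≤ 3 := by
  have : NeZero (m + m) := ⟨by omega⟩
  obtain ⟨S, hScard, hSupper⟩ := exists_seven_upper_zero_sum_pairs hm
  let mid : Fin (m + m) := ⟨m, by omega⟩
  have extremal : pairSum (X 0) (Y 0) (Z 0) + 7 * max (pairSum (X mid) (Y mid) (Z mid)) 1 ≤ 24 :=
    pairSum_add_seven_mul_max_le hq hB (hXqB _).1 (hYqB _).1 (hZqB _).1
      (hX (Fin.zero_le _)) (hY (Fin.zero_le _)) (hZ (Fin.zero_le _))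
      (hXqB _).2 (hYqB _).2 (hZqB _).2
      (h 0 mid mid (by simp [mid])) (h mid 0 mid (by simp [mid])) (h mid mid 0 (by simp [mid]))
  rw [← expect_pairSum X Y Z 0]
  refine expect_le_of_compensating_set (i₀ := 0) (S := S)
    (M := max (pairSum (X mid) (Y mid) (Z mid)) 1) ?_ ?_ ?_ ?_
  · intro hzero
    have := (hSupper 0 hzero).1
    simp only [Prod.fst_zero, Fin.val_zero] at this
    omega
  · exact fun p hp ↦ h _ _ _ (le_val_add_add_of_add_eq_zero (by abel) hp)
  · intro p hp
    obtain ⟨hi, hj, hk⟩ := hSupper p hp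
    exact (pairSum_le_max (hXqB _).1 (hYqB _).1 (hZqB _).1 (hX hi) (hY hj) (hZ hk)).trans
      (max_le_max le_rfl hq.le)
  · simp only [Prod.fst_zero, Prod.snd_zero, sub_zero, hScard]
    push_cast
    linarith

lemma exists_equiv_antitone {α U : Type*} [LinearOrder α] [Fintype U] {n : ℕ}
    (hn : Fintype.card U = n) (F : U → α) : ∃ e : Fin n ≃ U, Antitone (F ∘ e) := by
  let e := (Fintype.equivFinOfCardEq hn).symm
  exact ⟨(Tuple.sort (OrderDual.toDual ∘ F ∘ e)).trans e,
    Tuple.monotone_sort (OrderDual.toDual ∘ F ∘ e)⟩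

end Sorted

section PrimeField

variable {p : ℕ} [Fact p.Prime]

lemma add_add_eq_univ_of_le_card {A B C : Finset (ZMod p)} (hA : A.Nonempty) (hB : B.Nonempty)
    (hC : C.Nonempty) (hcard : p + 2 ≤ #A + #B + #C) : A + B + C = univ := by
  have hp : p.Prime := Fact.out
  have hAB := ZMod.cauchy_davenport hp hA hB
  have hABC := ZMod.cauchy_davenport hp (hA.add hB) hC
  apply eq_univ_of_card
  have hCpos := hC.card_pos
  have hle := card_le_univ (A + B + C)
  rw [ZMod.card] at hle ⊢
  omega

lemma exists_le_add_eq {n : ℕ} (e₁ e₂ e₃ : Fin n ↪ ZMod p) {i j k : Fin n}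
    (hijk : p ≤ (i : ℕ) + j + k + 1) (x : ZMod p) :
    ∃ i' ≤ i, ∃ j' ≤ j, ∃ k' ≤ k, e₁ i' + e₂ j' + e₃ k' = x := by
  have hfull : (Iic i).map e₁ + (Iic j).map e₂ + (Iic k).map e₃ = univ :=
    add_add_eq_univ_of_le_card (by simp) (by simp) (by simp) (by simp; omega)
  have hx := hfull ▸ mem_univ x
  simpa [mem_add] using hx

lemma exists_units_add_eq_and_lt_pairSum {q B : ℝ} (hq : 3 * q ^ 2 < 1) (hB : 3 * B ^ 2 ≤ 17)
    (hp : 7 ≤ p) {X Y Z : (ZMod p)ˣ → ℝ} (hX : ∀ a, X a ∈ Set.Icc (-q) B)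
    (hY : ∀ a, Y a ∈ Set.Icc (-q) B) (hZ : ∀ a, Z a ∈ Set.Icc (-q) B)
    (h : 3 < pairSum (𝔼 a, X a) (𝔼 a, Y a) (𝔼 a, Z a)) (x : ZMod p) :
    ∃ a b c : (ZMod p)ˣ, (a + b + c : ZMod p) = x ∧ 3 < pairSum (X a) (Y b) (Z c) := by
  obtain ⟨m, hm⟩ := (Fact.out : p.Prime).odd_of_ne_two (by omega)
  have hcard : Fintype.card (ZMod p)ˣ = m + m := by rw [ZMod.card_units]; omega
  obtain ⟨eX, hXanti⟩ := exists_equiv_antitone hcard X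
  obtain ⟨eY, hYanti⟩ := exists_equiv_antitone hcard Y
  obtain ⟨eZ, hZanti⟩ := exists_equiv_antitone hcard Z
  contrapose! h
  rw [← Fintype.expect_equiv eX (X ∘ eX) X fun _ ↦ rfl,
    ← Fintype.expect_equiv eY (Y ∘ eY) Y fun _ ↦ rfl,
    ← Fintype.expect_equiv eZ (Z ∘ eZ) Z fun _ ↦ rfl]
  refine pairSum_expect_le_of_antitone hq hB (by omega) hXanti hYanti hZanti
    (fun _ ↦ hX _) (fun _ ↦ hY _) (fun _ ↦ hZ _) fun i j k hijk ↦ ?_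
  let val : (ZMod p)ˣ ↪ ZMod p := ⟨Units.val, Units.val_injective⟩
  obtain ⟨i', hi, j', hj, k', hk, hsum⟩ := exists_le_add_eq (eX.toEmbedding.trans val)
    (eY.toEmbedding.trans val) (eZ.toEmbedding.trans val) (i := i) (j := j) (k := k) (by omega) x
  exact (pairSum_le_max (hX _).1 (hY _).1 (hZ _).1 (hXanti hi) (hYanti hj) (hZanti hk)).trans
    (max_le (h _ _ _ hsum) (by linarith))

end PrimeField

lemma exists_equiv_ker_prod_units {R S : Type*} [Ring R] [Ring S] (φ : R →+* S) [IsLocalHom φ]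
    (hφ : Function.Surjective φ) :
    ∃ (E : RingHom.ker φ × Sˣ ≃ Rˣ) (lift : Sˣ → R), (∀ s, φ (lift s) = s) ∧
      ∀ k s, (E (k, s) : R) = k + lift s := by
  choose lift hlift using fun s : Sˣ ↦ hφ s
  have map_add_lift (k : RingHom.ker φ) (s : Sˣ) : φ (k + lift s) = s := by
    rw [map_add, RingHom.mem_ker.1 k.2, hlift, zero_add]
  have isUnit_add (k : RingHom.ker φ) (s : Sˣ) : IsUnit (k + lift s : R) :=
    isUnit_of_map_unit φ _ (by rw [map_add_lift]; exact s.isUnit)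
  let E : RingHom.ker φ × Sˣ → Rˣ := fun p ↦ (isUnit_add p.1 p.2).unit
  have injective : E.Injective := by
    rintro ⟨k, s⟩ ⟨l, t⟩ h
    have hval : (k + lift s : R) = l + lift t := congrArg Units.val h
    obtain rfl : s = t := Units.ext (by rw [← map_add_lift k, hval, map_add_lift])
    exact Prod.ext (Subtype.ext (add_right_cancel hval)) rfl
  have surjective : E.Surjective := fun u ↦
    ⟨(⟨u - lift (Units.map φ u), by simp [RingHom.mem_ker, hlift]⟩, Units.map φ u),
      Units.ext (sub_add_cancel _ _)⟩
  exact ⟨Equiv.ofBijective E ⟨injective, surjective⟩, lift, hlift, fun _ _ ↦ rfl⟩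

/-- The averaging principle for the ring `R`: if `F : Rˣ → [-q, B]` has mean greater than `1`, then
every element of `R` is a sum of three units `a`, `b`, `c` with
`F a * F b + F b * F c + F c * F a > 3`. -/
def TernaryUnitSums (q B : ℝ) (R : Type*) [Ring R] [Fintype Rˣ] : Prop :=
  ∀ F : Rˣ → ℝ, (∀ a, F a ∈ Set.Icc (-q) B) → 1 < 𝔼 a, F a →
    ∀ x : R, ∃ a b c : Rˣ, (a + b + c : R) = x ∧ 3 < pairSum (F a) (F b) (F c)

namespace TernaryUnitSums

variable {q B : ℝ} {R S : Type*} [Ring R] [Ring S] [Fintype Rˣ] [Fintype Sˣ]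

lemma of_subsingleton [Subsingleton R] : TernaryUnitSums q B R := by
  intro F _ hmean x
  have hF : 1 < F 1 := by
    simpa [Subsingleton.elim _ (1 : Rˣ)] using hmean
  refine ⟨1, 1, 1, Subsingleton.elim _ _, ?_⟩
  unfold pairSum
  nlinarith

lemma of_ringEquiv (e : R ≃+* S) (hR : TernaryUnitSums q B R) : TernaryUnitSums q B S := by
  intro F hF hmean x
  let E : Rˣ ≃* Sˣ := Units.mapEquiv e.toMulEquiv
  have hmean' : 1 < 𝔼 a, F (E a) := by
    rwa [Fintype.expect_equiv E.toEquiv (fun a ↦ F (E a)) F fun _ ↦ rfl]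
  obtain ⟨a, b, c, hsum, hlt⟩ := hR (fun a ↦ F (E a)) (fun _ ↦ hF _) hmean' (e.symm x)
  refine ⟨E a, E b, E c, ?_, hlt⟩
  calc (E a + E b + E c : S) = e (a + b + c) := by simp [E]
    _ = x := by rw [hsum, e.apply_symm_apply]

lemma exists_lt_pairSum_expect {K U : Type*} [Fintype K] [Nonempty K] [Fintype U]
    (hS : TernaryUnitSums q B S) (E : K × Sˣ ≃ U) {F : U → ℝ} (hF : ∀ u, F u ∈ Set.Icc (-q) B)
    (hmean : 1 < 𝔼 u, F u) (x : S) :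
    ∃ a b c : Sˣ, (a + b + c : S) = x ∧
      3 < pairSum (𝔼 k, F (E (k, a))) (𝔼 k, F (E (k, b))) (𝔼 k, F (E (k, c))) := by
  refine hS (fun s ↦ 𝔼 k, F (E (k, s))) (fun s ↦ expect_mem_Icc fun k ↦ hF _) ?_ x
  rwa [expect_comm, ← expect_product' univ univ fun k s ↦ F (E (k, s)), univ_product_univ,
    Fintype.expect_equiv E _ F fun _ ↦ rfl]

lemma zmod_prod (hq : 3 * q ^ 2 < 1) (hB : 3 * B ^ 2 ≤ 17) {p : ℕ} [Fact p.Prime] (hp : 7 ≤ p)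
    [Fintype (ZMod p × S)ˣ] (hS : TernaryUnitSums q B S) : TernaryUnitSums q B (ZMod p × S) := by
  rintro F hF hmean ⟨x, y⟩
  let E : (ZMod p)ˣ × Sˣ ≃* (ZMod p × S)ˣ := MulEquiv.prodUnits.symm
  obtain ⟨a, b, c, hy, havg⟩ := hS.exists_lt_pairSum_expect E.toEquiv hF hmean y
  obtain ⟨a', b', c', hx, hlt⟩ := exists_units_add_eq_and_lt_pairSum hq hB hp
    (fun _ ↦ hF _) (fun _ ↦ hF _) (fun _ ↦ hF _) havg x
  exact ⟨E (a', a), E (b', b), E (c', c), Prod.ext hx hy, hlt⟩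

lemma of_surjective [Finite R] (φ : R →+* S) [IsLocalHom φ] (hφ : Function.Surjective φ)
    (hS : TernaryUnitSums q B S) : TernaryUnitSums q B R := by
  intro F hF hmean x
  have : Fintype (RingHom.ker φ) := Fintype.ofFinite _
  obtain ⟨E, lift, hlift, hE⟩ := exists_equiv_ker_prod_units φ hφ
  obtain ⟨a, b, c, hsum, havg⟩ := hS.exists_lt_pairSum_expect E hF hmean (φ x)
  let y : RingHom.ker φ := ⟨x - (lift a + lift b + lift c), by
    simp [RingHom.mem_ker, hlift, hsum]⟩
  obtain ⟨k, l, n, hkln, hlt⟩ := exists_add_eq_and_lt_pairSum havg y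
  refine ⟨E (k, a), E (l, b), E (n, c), ?_, hlt⟩
  have hval : (k + l + n : R) = x - (lift a + lift b + lift c) := congrArg Subtype.val hkln
  calc (E (k, a) + E (l, b) + E (n, c) : R) = k + l + n + (lift a + lift b + lift c) := by
        rw [hE, hE, hE]; abel
    _ = x := by rw [hval, sub_add_cancel]

end TernaryUnitSums

lemma isLocalHom_castHom_of_dvd {d m : ℕ} (hdm : d ∣ m) :
    IsLocalHom (ZMod.castHom (dvd_mul_left m d) (ZMod m)) := by
  refine ⟨fun a ha ↦ ?_⟩
  obtain ⟨n, rfl⟩ := ZMod.intCast_surjective a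
  rw [map_intCast, ZMod.coe_int_isUnit_iff_isCoprime] at ha
  rw [ZMod.coe_int_isUnit_iff_isCoprime, Nat.cast_mul]
  exact (ha.of_isCoprime_of_dvd_left (Int.natCast_dvd_natCast.2 hdm)).mul_left ha

lemma seven_le_of_prime_of_coprime_thirty {p : ℕ} (hp : p.Prime) (h : p.Coprime 30) : 7 ≤ p := by
  by_contra! hlt
  interval_cases p <;> revert hp h <;> decide

lemma ternaryUnitSums_zmod {q B : ℝ} (hq : 3 * q ^ 2 < 1) (hB : 3 * B ^ 2 ≤ 17) {m : ℕ}
    [hm₀ : NeZero m] (hm : m.Coprime 30) : TernaryUnitSums q B (ZMod m) := by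
  induction m using induction_on_primes generalizing hm₀ with
  | zero => exact absurd rfl (NeZero.ne 0)
  | one => exact .of_subsingleton
  | prime_mul p m hp ih =>
    have : Fact p.Prime := ⟨hp⟩
    have : NeZero m := ⟨fun h ↦ NeZero.ne (p * m) (by simp [h])⟩
    have hZMod := ih (Nat.Coprime.coprime_mul_left hm)
    by_cases hpm : p ∣ m
    · have := isLocalHom_castHom_of_dvd hpm
      exact hZMod.of_surjective _ (ZMod.castHom_surjective (dvd_mul_left m p))
    · have hp7 := seven_le_of_prime_of_coprime_thirty hp (Nat.Coprime.coprime_mul_right hm)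
      exact (hZMod.zmod_prod hq hB hp7).of_ringEquiv
        (ZMod.chineseRemainder (hp.coprime_iff_not_dvd.2 hpm)).symm

/-- The affine image of `max r (2 / 11)` under `r ↦ (16 * r - 5) / 5`. The affine map turns
`r * s + s * t + t * r > 5 / 8 * (r + s + t)` into `pairSum > 3`; the value `2 / 11` is the largest
lower clip for which a clipped entry can never occur in a triple with `pairSum > 3`. -/
noncomputable def rescaledClip (r : ℝ) : ℝ := (16 * max r (2 / 11) - 5) / 5

section RescaledClip

variable {r s t : ℝ}

lemma le_rescaledClip (r : ℝ) : (16 * r - 5) / 5 ≤ rescaledClip r := by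
  unfold rescaledClip
  gcongr
  exact le_max_left r _

lemma rescaledClip_mem_Icc (hr : r ≤ 1) : rescaledClip r ∈ Set.Icc (-(23 / 55)) (11 / 5) := by
  have hlow : 2 / 11 ≤ max r (2 / 11) := le_max_right _ _
  have hupp : max r (2 / 11) ≤ 1 := max_le hr (by norm_num)
  unfold rescaledClip
  constructor <;> linarith

lemma rescaledClip_eq_of_lt_pairSum {y z : ℝ} (hy : y ∈ Set.Icc (-(23 / 55)) (11 / 5))
    (hz : z ∈ Set.Icc (-(23 / 55)) (11 / 5)) (h : 3 < pairSum (rescaledClip r) y z) :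
    rescaledClip r = (16 * r - 5) / 5 := by
  rcases le_total (2 / 11) r with hr | hr
  · rw [rescaledClip, max_eq_left hr]
  · have hclip : rescaledClip r = -(23 / 55) := by
      rw [rescaledClip, max_eq_right hr]
      norm_num
    have hle := pairSum_neg_le (by norm_num) hy hz
    rw [hclip] at h
    linarith

lemma lt_of_three_lt_pairSum_rescaledClip (hr : r ≤ 1) (hs : s ≤ 1) (ht : t ≤ 1)
    (h : 3 < pairSum (rescaledClip r) (rescaledClip s) (rescaledClip t)) :
    5 / 8 * (r + s + t) < r * s + s * t + t * r := by
  have hr' := rescaledClip_mem_Icc hr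
  have hs' := rescaledClip_mem_Icc hs
  have ht' := rescaledClip_mem_Icc ht
  have h₂ : 3 < pairSum (rescaledClip s) (rescaledClip t) (rescaledClip r) := by
    rwa [← pairSum_rotate]
  have h₃ : 3 < pairSum (rescaledClip t) (rescaledClip r) (rescaledClip s) := by
    rwa [pairSum_rotate]
  rw [rescaledClip_eq_of_lt_pairSum hs' ht' h, rescaledClip_eq_of_lt_pairSum ht' hr' h₂,
    rescaledClip_eq_of_lt_pairSum hr' hs' h₃, pairSum] at h
  linarith

end RescaledClip

theorem stmt12_general (m : ℕ) [NeZero m] (hcop : Nat.gcd m 30 = 1)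
    (f : (ZMod m)ˣ → ℝ) (hf : ∀ x, f x ≤ 1)
    (hsum : ∑ x : (ZMod m)ˣ, f x > 5 / 8 * (Nat.totient m : ℝ)) :
    ∀ x : ZMod m, ∃ a b c : (ZMod m)ˣ,
      x = (a : ZMod m) + (b : ZMod m) + (c : ZMod m) ∧
      f a * f b + f b * f c + f c * f a > 5 / 8 * (f a + f b + f c) := by
  intro x
  have hmean : 5 / 8 < 𝔼 a, f a := by
    rwa [Fintype.expect_eq_sum_div_card, ZMod.card_units_eq_totient, lt_div_iff₀ (by
      exact_mod_cast Nat.totient_pos.2 (NeZero.pos m))]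
  have hmean_clip : 1 < 𝔼 a, rescaledClip (f a) := calc
    1 < (16 * (𝔼 a, f a) - 5) / 5 := by linarith
    _ = 𝔼 a, (16 * f a - 5) / 5 := by
      rw [← expect_div, expect_sub_distrib, ← mul_expect, Fintype.expect_const]
    _ ≤ 𝔼 a, rescaledClip (f a) := expect_le_expect fun a _ ↦ le_rescaledClip (f a)
  obtain ⟨a, b, c, habc, hlt⟩ := ternaryUnitSums_zmod (by norm_num) (by norm_num) hcop
    (fun a ↦ rescaledClip (f a)) (fun a ↦ rescaledClip_mem_Icc (hf a)) hmean_clip x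
  exact ⟨a, b, c, habc.symm, lt_of_three_lt_pairSum_rescaledClip (hf a) (hf b) (hf c) hlt⟩

/-- Proposition: let `m` be squarefree with `gcd(m, 30) = 1` and `f : (ℤ/mℤ)* → [0,1]` with
average greater than `5/8`. Then every `x ∈ ℤ/mℤ` can be written as `x = a + b + c` with
`a, b, c` units and `f(a)f(b) + f(b)f(c) + f(c)f(a) > (5/8)(f(a) + f(b) + f(c))`. -/
theorem stmt12 (m : ℕ) [NeZero m] (hsf : Squarefree m) (hcop : Nat.gcd m 30 = 1)
    (f : (ZMod m)ˣ → ℝ) (hf : ∀ x, f x ∈ Set.Icc (0 : ℝ) 1)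
    (hsum : ∑ x : (ZMod m)ˣ, f x > 5 / 8 * (Nat.totient m : ℝ)) :
    ∀ x : ZMod m, ∃ a b c : (ZMod m)ˣ,
      x = (a : ZMod m) + (b : ZMod m) + (c : ZMod m) ∧
      f a * f b + f b * f c + f c * f a > 5 / 8 * (f a + f b + f c) :=
  stmt12_general m hcop f (fun x ↦ (hf x).2) hsum
end

section
/- Let f₁, f₂, f₃ : (Z/15Z)* → [0,1] be arbitrary functions and set Fᵢ = ∑_{x ∈ (Z/15Z)*} fᵢ(x). Suppose F₁F₂ + F₂F₃ + F₃F₁ > 5(F₁ + F₂ + F₃). Then for every x ∈ Z/15Z there exist units a₁, a₂, a₃ ∈ (Z/15Z)* with x = a₁ + a₂ + a₃ such that f₁(a₁)f₂(a₂)f₃(a₃) > 0 and f₁(a₁) + f₂(a₂) + f₃(a₃) > 3/2. -/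
/-!
Sort the positive values of each `fᵢ` decreasingly. If no representation of `x` is as required, then
the `i`-th, `j`-th and `k`-th largest values of `f₁`, `f₂`, `f₃` add up to at most `3/2` whenever
three sets of units of sizes `i`, `j`, `k` necessarily represent `x`. By the Chinese remainder
theorem and Cauchy–Davenport in `ℤ/5ℤ`, this is so when `i + j + k ≥ 15`, at most one of the sizes
is below `5`, and they are not all equal to `5`.

The hypothesis on the `Fᵢ` is preserved when each `Fᵢ` is increased to the number of positive values
of `fᵢ`, which leaves few possibilities for the three numbers of positive values. For each of them
some of the inequalities above, together with `0 ≤ fᵢ ≤ 1`, give `F₁ + F₂ + F₃ ≤ 15`, and then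
`F₁F₂ + F₂F₃ + F₃F₁ ≤ (F₁ + F₂ + F₃)² / 3 ≤ 5(F₁ + F₂ + F₃)`.
-/

open Finset
open scoped Pointwise

section QuadraticCondition

variable {K : Type*} [Field K] [LinearOrder K] [IsStrictOrderedRing K] {κ x y z X Y Z : K}

lemma lt_add_of_mul_sum_lt (hx : 0 ≤ x) (hy : 0 ≤ y) (hz : 0 ≤ z)
    (h : κ * (x + y + z) < x * y + y * z + z * x) : κ < y + z := by
  by_contra! hκ
  have hx' : x * (y + z) ≤ x * κ := mul_le_mul_of_nonneg_left hκ hx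
  have hyz : y * z ≤ (y + z) * (y + z) := by nlinarith
  have hκ' : (y + z) * (y + z) ≤ κ * (y + z) := mul_le_mul_of_nonneg_right hκ (add_nonneg hy hz)
  linarith

lemma mul_sum_lt_of_le_left (hκ : κ ≤ y + z) (hX : x ≤ X)
    (h : κ * (x + y + z) < x * y + y * z + z * x) :
    κ * (X + y + z) < X * y + y * z + z * X := by
  have : 0 ≤ (X - x) * (y + z - κ) := mul_nonneg (sub_nonneg.2 hX) (sub_nonneg.2 hκ)
  linarith

lemma mul_sum_lt_mono (hx : 0 ≤ x) (hy : 0 ≤ y) (hz : 0 ≤ z) (hX : x ≤ X) (hY : y ≤ Y) (hZ : z ≤ Z)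
    (h : κ * (x + y + z) < x * y + y * z + z * x) :
    κ * (X + Y + Z) < X * Y + Y * Z + Z * X := by
  have hyz : κ < y + z := lt_add_of_mul_sum_lt hx hy hz h
  have hzx : κ < z + x := lt_add_of_mul_sum_lt hy hz hx (by linarith)
  have hxy : κ < x + y := lt_add_of_mul_sum_lt hz hx hy (by linarith)
  have h₁ : κ * (X + y + z) < X * y + y * z + z * X := mul_sum_lt_of_le_left hyz.le hX h
  have h₂ : κ * (Y + z + X) < Y * z + z * X + X * Y :=
    mul_sum_lt_of_le_left (by linarith) hY (by linarith)
  have h₃ : κ * (Z + X + Y) < Z * X + X * Y + Y * Z :=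
    mul_sum_lt_of_le_left (by linarith) hZ (by linarith)
  linarith

lemma mul_add_mul_add_mul_le_of_sum_le (hx : 0 ≤ x) (hy : 0 ≤ y) (hz : 0 ≤ z)
    (h : x + y + z ≤ 3 * κ) : x * y + y * z + z * x ≤ κ * (x + y + z) := by
  have hsq : 3 * (x * y + y * z + z * x) ≤ (x + y + z) * (x + y + z) := by
    linarith [sq_nonneg (x - y), sq_nonneg (y - z), sq_nonneg (z - x)]
  have hsum : (x + y + z) * (x + y + z) ≤ 3 * κ * (x + y + z) :=
    mul_le_mul_of_nonneg_right h (by positivity)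
  linarith

end QuadraticCondition

section SumsOfUnits

lemma exists_add_add_eq_of_card {p : ℕ} (hp : p.Prime) {A B C : Finset (ZMod p)}
    (hA : A.Nonempty) (hB : B.Nonempty) (hC : C.Nonempty) (h : p + 2 ≤ #A + #B + #C) (x : ZMod p) :
    ∃ a ∈ A, ∃ b ∈ B, ∃ c ∈ C, a + b + c = x := by
  have : NeZero p := ⟨hp.ne_zero⟩
  have hAB := ZMod.cauchy_davenport hp hA hB
  have hABC := ZMod.cauchy_davenport hp (hA.add hB) hC
  have hcard : #(A + B + C) = Fintype.card (ZMod p) := by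
    have := card_le_univ (A + B + C)
    have := hC.card_pos
    have := ZMod.card p
    omega
  have hx : x ∈ A + B + C := (card_eq_iff_eq_univ _).1 hcard ▸ mem_univ x
  obtain ⟨y, hy, c, hc, rfl⟩ := mem_add.1 hx
  obtain ⟨a, ha, b, hb, rfl⟩ := mem_add.1 hy
  exact ⟨a, ha, b, hb, c, hc, rfl⟩

/-- Sizes of three nonempty subsets of `ℤ/5ℤ` to which Cauchy–Davenport applies, so that every
residue is a sum of one element of each. -/
def CoversModFive (a b c : ℕ) : Prop := 0 < a ∧ 0 < b ∧ 0 < c ∧ 7 ≤ a + b + c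

/-- Sizes of three sets of units modulo `15` which force every residue to be a sum of one element of
each. Two sizes below `5` are excluded because four units may share their residue modulo `3`; the
sizes `5, 5, 5` would leave only `1 + 1 + 4 < 7` elements when the sets split as `1 + 4`. -/
def IsAdmissible (i j k : ℕ) : Prop :=
  0 < i ∧ 0 < j ∧ 0 < k ∧ 15 ≤ i + j + k ∧
    (5 ≤ i ∨ 5 ≤ j) ∧ (5 ≤ j ∨ 5 ≤ k) ∧ (5 ≤ k ∨ 5 ≤ i) ∧ ¬(i = 5 ∧ j = 5 ∧ k = 5)

instance (i j k : ℕ) : Decidable (IsAdmissible i j k) :=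
  inferInstanceAs (Decidable (_ ∧ _))

lemma IsAdmissible.swap_left {i j k : ℕ} (h : IsAdmissible i j k) : IsAdmissible j i k := by
  unfold IsAdmissible at *; omega

lemma IsAdmissible.swap_right {i j k : ℕ} (h : IsAdmissible i j k) : IsAdmissible i k j := by
  unfold IsAdmissible at *; omega

variable {a₁ a₂ b₁ b₂ c₁ c₂ : ℕ}

-- The two sums add up to at least `15`, so the larger one is at least `8`. A size can vanish in it
-- only if it is `8 = 4 + 4 + 0`, and then the other one is at least `7`.
lemma IsAdmissible.coversModFive_pure (h : IsAdmissible (a₁ + a₂) (b₁ + b₂) (c₁ + c₂))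
    (ha₁ : a₁ ≤ 4) (ha₂ : a₂ ≤ 4) (hb₁ : b₁ ≤ 4) (hb₂ : b₂ ≤ 4) (hc₁ : c₁ ≤ 4) (hc₂ : c₂ ≤ 4) :
    CoversModFive a₁ b₁ c₁ ∨ CoversModFive a₂ b₂ c₂ := by
  unfold IsAdmissible at h
  unfold CoversModFive
  omega

-- If `a₁ = 0`, then `b₁` and `c₁` are positive and `a₂ + b₁ + c₁ ≥ 15 - b₂ - c₂ ≥ 7`. If none of
-- `a₁, b₁, c₁` vanishes, the three sums add up to at least `15 + (a₁ + b₁ + c₁)`, which exceeds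
-- `3 * 6` except in the excluded case `5, 5, 5`.
lemma IsAdmissible.coversModFive_mixed (h : IsAdmissible (a₁ + a₂) (b₁ + b₂) (c₁ + c₂))
    (ha₁ : a₁ ≤ 4) (ha₂ : a₂ ≤ 4) (hb₁ : b₁ ≤ 4) (hb₂ : b₂ ≤ 4) (hc₂ : c₂ ≤ 4) :
    CoversModFive a₁ b₁ c₂ ∨ CoversModFive a₁ b₂ c₁ ∨ CoversModFive a₂ b₁ c₁ := by
  unfold IsAdmissible at h
  unfold CoversModFive
  omega

/-- The Chinese remainder isomorphism `ℤ/15ℤ ≃ ℤ/3ℤ × ℤ/5ℤ`. -/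
def crt : ZMod 15 ≃+* ZMod 3 × ZMod 5 :=
  ZMod.chineseRemainder (m := 3) (n := 5) (by norm_num)

lemma crt_fst_ne_zero (u : (ZMod 15)ˣ) : (crt u).1 ≠ 0 :=
  ((u.isUnit.map crt).map (RingHom.fst (ZMod 3) (ZMod 5))).ne_zero

lemma crt_snd_ne_zero (u : (ZMod 15)ˣ) : (crt u).2 ≠ 0 := by
  have : Fact (Nat.Prime 5) := ⟨by norm_num⟩
  exact ((u.isUnit.map crt).map (RingHom.snd (ZMod 3) (ZMod 5))).ne_zero

/-- The residues modulo `5` of those elements of `A` that are congruent to `e` modulo `3`. -/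
def residuesModFive (A : Finset (ZMod 15)ˣ) (e : ZMod 3) : Finset (ZMod 5) :=
  (A.filter fun u : (ZMod 15)ˣ => (crt u).1 = e).image fun u : (ZMod 15)ˣ => (crt u).2

lemma mem_residuesModFive {A : Finset (ZMod 15)ˣ} {e : ZMod 3} {y : ZMod 5} :
    y ∈ residuesModFive A e ↔ ∃ u ∈ A, crt u = (e, y) := by
  simp [residuesModFive, Prod.ext_iff, and_assoc]

lemma card_residuesModFive (A : Finset (ZMod 15)ˣ) (e : ZMod 3) :
    #(residuesModFive A e) = #(A.filter fun u : (ZMod 15)ˣ => (crt u).1 = e) := by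
  refine card_image_of_injOn fun u hu v hv huv => Units.ext (crt.injective (Prod.ext ?_ huv))
  exact (mem_filter.1 hu).2.trans (mem_filter.1 hv).2.symm

lemma card_residuesModFive_le_four (A : Finset (ZMod 15)ˣ) (e : ZMod 3) :
    #(residuesModFive A e) ≤ 4 := by
  have hsub : residuesModFive A e ⊆ univ.erase 0 := fun y hy => by
    obtain ⟨u, -, hu⟩ := mem_residuesModFive.1 hy
    have : y ≠ 0 := by simpa only [hu] using crt_snd_ne_zero u
    simpa only [mem_erase, mem_univ, and_true] using this
  exact (card_le_card hsub).trans (by decide)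

lemma card_residuesModFive_one_add_two (A : Finset (ZMod 15)ˣ) :
    #(residuesModFive A 1) + #(residuesModFive A 2) = #A := by
  have hmaps : Set.MapsTo (fun u : (ZMod 15)ˣ => (crt ↑u).1) A ({1, 2} : Finset (ZMod 3)) := by
    have hne : ∀ e : ZMod 3, e ≠ 0 → e ∈ ({1, 2} : Finset (ZMod 3)) := by decide
    exact fun u _ => hne _ (crt_fst_ne_zero u)
  rw [card_eq_sum_card_fiberwise hmaps, sum_pair (by decide), card_residuesModFive,
    card_residuesModFive]

lemma exists_coversModFive_card {A B C : Finset (ZMod 15)ˣ} (h : IsAdmissible #A #B #C)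
    (e : ZMod 3) : ∃ e₁ e₂ e₃ : ZMod 3, e₁ + e₂ + e₃ = e ∧
      CoversModFive #(residuesModFive A e₁) #(residuesModFive B e₂) #(residuesModFive C e₃) := by
  have le := card_residuesModFive_le_four
  have h₁₂ := h
  simp only [← card_residuesModFive_one_add_two] at h₁₂
  have h₂₁ := h₁₂
  simp only [add_comm #(residuesModFive _ 1)] at h₂₁
  have he : e = 0 ∨ e = 1 ∨ e = 2 := by decide +revert
  rcases he with rfl | rfl | rfl
  · rcases h₁₂.coversModFive_pure (le _ _) (le _ _) (le _ _) (le _ _) (le _ _) (le _ _) with h | h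
    · exact ⟨1, 1, 1, by decide, h⟩
    · exact ⟨2, 2, 2, by decide, h⟩
  · rcases h₁₂.coversModFive_mixed (le _ _) (le _ _) (le _ _) (le _ _) (le _ _) with h | h | h
    · exact ⟨1, 1, 2, by decide, h⟩
    · exact ⟨1, 2, 1, by decide, h⟩
    · exact ⟨2, 1, 1, by decide, h⟩
  · rcases h₂₁.coversModFive_mixed (le _ _) (le _ _) (le _ _) (le _ _) (le _ _) with h | h | h
    · exact ⟨2, 2, 1, by decide, h⟩
    · exact ⟨2, 1, 2, by decide, h⟩
    · exact ⟨1, 2, 2, by decide, h⟩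

lemma exists_units_add_add_eq {A B C : Finset (ZMod 15)ˣ} (h : IsAdmissible #A #B #C)
    (x : ZMod 15) : ∃ a ∈ A, ∃ b ∈ B, ∃ c ∈ C, x = (a : ZMod 15) + b + c := by
  obtain ⟨e₁, e₂, e₃, he, hA, hB, hC, hcard⟩ := exists_coversModFive_card h (crt x).1
  obtain ⟨p, hp, q, hq, r, hr, hpqr⟩ := exists_add_add_eq_of_card (by norm_num : Nat.Prime 5)
    (card_pos.1 hA) (card_pos.1 hB) (card_pos.1 hC) hcard (crt x).2
  obtain ⟨a, ha, hpa⟩ := mem_residuesModFive.1 hp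
  obtain ⟨b, hb, hqb⟩ := mem_residuesModFive.1 hq
  obtain ⟨c, hc, hrc⟩ := mem_residuesModFive.1 hr
  refine ⟨a, ha, b, hb, c, hc, crt.injective ?_⟩
  rw [map_add, map_add, hpa, hqb, hrc]
  exact Prod.ext he.symm hpqr.symm

end SumsOfUnits

/-- The decreasing list `P 1 ≥ P 2 ≥ … ≥ P size` of the positive values of a `[0, 1]`-valued
function on a set of at most `n` elements, continued by zeros. Indexing starts at `1`, so that `P k`
is the `k`-th largest value; `P 0` carries no information. -/
structure Profile (n : ℕ) where
  toFun : ℕ → ℝ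
  size : ℕ
  size_le : size ≤ n
  antitone : Antitone toFun
  le_one : ∀ k, toFun k ≤ 1
  eq_zero : ∀ k, size < k → toFun k = 0

namespace Profile

variable {n : ℕ}

instance : CoeFun (Profile n) fun _ => ℕ → ℝ := ⟨toFun⟩

lemma nonneg (P : Profile n) (k : ℕ) : 0 ≤ P k := by
  have : P (max k (P.size + 1)) = 0 := P.eq_zero _ (by omega)
  exact this ▸ P.antitone (le_max_left _ _)

/-- The sum of the listed values. -/
def total (P : Profile n) : ℝ := ∑ k ∈ range n, P (k + 1)

lemma total_nonneg (P : Profile n) : 0 ≤ P.total := sum_nonneg fun _ _ => P.nonneg _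

lemma total_le_size (P : Profile n) : P.total ≤ P.size := by
  have hsize : ∑ k ∈ range P.size, P (k + 1) = P.total :=
    sum_subset (range_subset_range.2 P.size_le) fun k _ hk =>
      P.eq_zero _ (Nat.lt_succ_of_le (not_lt.1 (mt mem_range.2 hk)))
  calc P.total = ∑ k ∈ range P.size, P (k + 1) := hsize.symm
    _ ≤ ∑ _k ∈ range P.size, 1 := sum_le_sum fun _ _ => P.le_one _
    _ = P.size := by simp

/-- The profile listing the values of a decreasing tuple in `[0, 1]`. -/
def ofAntitone {m : ℕ} (hmn : m ≤ n) (g : Fin m → ℝ) (hg : Antitone g)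
    (hmem : ∀ i, g i ∈ Set.Icc (0 : ℝ) 1) : Profile n where
  toFun k := if h : k - 1 < m then g ⟨k - 1, h⟩ else 0
  size := m
  size_le := hmn
  antitone i j hij := by
    beta_reduce
    split_ifs with hj hi
    · exact hg (Fin.mk_le_mk.2 (by omega))
    · omega
    · exact (hmem _).1
    · exact le_rfl
  le_one k := by
    split_ifs
    · exact (hmem _).2
    · exact zero_le_one
  eq_zero k hk := dif_neg (by omega)

lemma total_ofAntitone {m : ℕ} (hmn : m ≤ n) (g : Fin m → ℝ) (hg : Antitone g)
    (hmem : ∀ i, g i ∈ Set.Icc (0 : ℝ) 1) : (ofAntitone hmn g hg hmem).total = ∑ i, g i := by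
  rw [sum_fin_eq_sum_range]
  refine (sum_subset (range_subset_range.2 hmn) fun k _ hk => ?_).symm
  exact dif_neg (mt mem_range.2 hk)

end Profile

lemma exists_equiv_antitone_s13 {α β : Type*} [LinearOrder β] (S : Finset α) (f : α → β) :
    ∃ σ : Fin #S ≃ S, Antitone fun i => f (σ i) :=
  ⟨(Tuple.sort fun i => OrderDual.toDual (f (S.equivFin.symm i))).trans S.equivFin.symm,
    Tuple.monotone_sort fun i => OrderDual.toDual (f (S.equivFin.symm i))⟩

lemma exists_profile {α : Type*} [Fintype α] {n : ℕ} (hn : Fintype.card α ≤ n) {f : α → ℝ}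
    (hf : ∀ x, f x ∈ Set.Icc (0 : ℝ) 1) :
    ∃ P : Profile n, P.total = ∑ x, f x ∧
      ∀ k ≤ P.size, ∃ A : Finset α, #A = k ∧ ∀ x ∈ A, 0 < f x ∧ P k ≤ f x := by
  classical
  let S : Finset α := {x | 0 < f x}
  obtain ⟨σ, hσ⟩ := exists_equiv_antitone_s13 S f
  let P : Profile n := .ofAntitone ((card_le_univ S).trans hn) _ hσ fun i => hf _
  refine ⟨P, ?_, fun k hk => ?_⟩
  · have hsupp : ∑ x ∈ S, f x = ∑ x, f x := sum_filter_of_ne fun x _ hx => (hf x).1.lt_of_ne' hx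
    rw [Profile.total_ofAntitone, Equiv.sum_comp σ fun x => f x, sum_coe_sort, hsupp]
  · let largest : Fin k ↪ α :=
      ((Fin.castLEEmb hk).trans σ.toEmbedding).trans (Function.Embedding.subtype _)
    refine ⟨univ.map largest, by simp, fun x hx => ?_⟩
    obtain ⟨i, -, rfl⟩ := mem_map.1 hx
    refine ⟨(mem_filter.1 (σ _).2).2, ?_⟩
    have hlast : k - 1 < #S := (Nat.sub_one_lt_of_lt i.isLt).trans_le hk
    calc P k = f (σ ⟨k - 1, hlast⟩) := dif_pos hlast
      _ ≤ f (largest i) := hσ (Fin.mk_le_mk.2 (Nat.le_pred_of_lt i.isLt))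

namespace Profile

section Compatible

variable {n : ℕ} {P Q R : Profile n}

/-- The inequalities that hold between the profiles of `f₁`, `f₂`, `f₃` when some residue modulo
`15` has no representation of the required kind. -/
def Compatible (P Q R : Profile n) : Prop :=
  ∀ i j k, IsAdmissible i j k → i ≤ P.size → j ≤ Q.size → k ≤ R.size → P i + Q j + R k ≤ 3 / 2

lemma Compatible.swap_left (h : Compatible P Q R) : Compatible Q P R :=
  fun i j k hijk hi hj hk => by linarith [h j i k hijk.swap_left hj hi hk]

lemma Compatible.swap_right (h : Compatible P Q R) : Compatible P R Q :=
  fun i j k hijk hi hj hk => by linarith [h i k j hijk.swap_right hi hk hj]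

lemma Compatible.add_add_le (h : Compatible P Q R) (i j k : ℕ)
    (hijk : IsAdmissible i j k := by decide) (hi : i ≤ P.size := by lia)
    (hj : j ≤ Q.size := by lia) (hk : k ≤ R.size := by lia) : P i + Q j + R k ≤ 3 / 2 :=
  h i j k hijk hi hj hk

end Compatible

section SumBound

variable {P Q R : Profile 8}

lemma total_eq_sum_eight (P : Profile 8) :
    P.total = P 1 + P 2 + P 3 + P 4 + P 5 + P 6 + P 7 + P 8 := by
  simp [total, sum_range_succ]

lemma chain_eight (P : Profile 8) : 0 ≤ P 8 ∧ P 8 ≤ P 7 ∧ P 7 ≤ P 6 ∧ P 6 ≤ P 5 ∧ P 5 ≤ P 4 ∧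
    P 4 ≤ P 3 ∧ P 3 ≤ P 2 ∧ P 2 ≤ P 1 ∧ P 1 ≤ 1 := by
  refine ⟨P.nonneg 8, ?_, ?_, ?_, ?_, ?_, ?_, ?_, P.le_one 1⟩ <;> exact P.antitone (by norm_num)

-- In each case below, the listed inequalities `P i + Q j + R k ≤ 3 / 2` are added up. Every value
-- occurring in the totals is bounded either by one of equal or smaller index used there, or by `1`.
lemma Compatible.total_le_of_seven_le (h : Compatible P Q R) (hP : 2 ≤ P.size) (hQ : 7 ≤ Q.size)
    (hR : 7 ≤ R.size) : P.total + Q.total + R.total ≤ 15 := by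
  simp only [total_eq_sum_eight]
  have chainP := P.chain_eight
  have chainQ := Q.chain_eight
  have chainR := R.chain_eight
  have hsize : P.size = 2 ∨ P.size = 3 ∨ (4 ≤ P.size ∧ P.size ≤ 5) ∨ P.size = 6 ∨ 7 ≤ P.size := by
    lia
  rcases hsize with hsize | hsize | hsize | hsize | hsize
  · linarith [P.eq_zero 3 (by lia), h.add_add_le 1 7 7, h.add_add_le 2 6 7]
  · linarith [P.eq_zero 4 (by lia), h.add_add_le 1 7 7, h.add_add_le 2 6 7, h.add_add_le 3 6 6]
  · linarith [P.eq_zero 6 (by lia), h.add_add_le 1 7 7, h.add_add_le 2 7 6, h.add_add_le 3 5 7,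
      h.add_add_le 4 6 5]
  · linarith [P.eq_zero 7 (by lia), h.add_add_le 2 6 7, h.add_add_le 2 7 6, h.add_add_le 4 6 5,
      h.add_add_le 5 4 6, h.add_add_le 6 5 4]
  · linarith [h.add_add_le 3 5 7, h.add_add_le 3 7 5, h.add_add_le 5 3 7, h.add_add_le 5 7 3,
      h.add_add_le 7 3 5, h.add_add_le 7 5 3]

lemma Compatible.total_le_of_size_eq_six (h : Compatible P Q R) (hP : 3 ≤ P.size)
    (hPQ : P.size ≤ Q.size) (hQ : Q.size = 6) (hQR : Q.size ≤ R.size)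
    (hPR : 10 ≤ P.size + R.size) : P.total + Q.total + R.total ≤ 15 := by
  simp only [total_eq_sum_eight]
  have chainP := P.chain_eight
  have chainQ := Q.chain_eight
  have chainR := R.chain_eight
  have hQ₇ : Q 7 = 0 := Q.eq_zero 7 (by lia)
  have hsize : P.size = 3 ∨ P.size = 4 ∨ P.size = 5 ∨ (P.size = 6 ∧ R.size = 6) ∨
      (P.size = 6 ∧ 7 ≤ R.size) := by lia
  rcases hsize with hsize | hsize | hsize | hsize | hsize
  · linarith [P.eq_zero 4 (by lia), h.add_add_le 2 6 7, h.add_add_le 3 5 7]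
  · linarith [P.eq_zero 5 (by lia), h.add_add_le 3 6 6, h.add_add_le 4 5 6]
  · linarith [P.eq_zero 6 (by lia), h.add_add_le 3 6 6, h.add_add_le 4 5 6, h.add_add_le 5 4 6]
  · linarith [P.eq_zero 7 (by lia), R.eq_zero 7 (by lia), h.add_add_le 4 5 6, h.add_add_le 4 6 5]
  · linarith [P.eq_zero 7 (by lia), h.add_add_le 3 5 7, h.add_add_le 4 6 5, h.add_add_le 5 4 6,
      h.add_add_le 6 3 6]

lemma Compatible.total_le_of_size_eq_five (h : Compatible P Q R) (hP : 4 ≤ P.size)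
    (hPQ : P.size ≤ Q.size) (hQ : Q.size = 5) (hPR : 11 ≤ P.size + R.size) :
    P.total + Q.total + R.total ≤ 15 := by
  simp only [total_eq_sum_eight]
  have chainP := P.chain_eight
  have chainQ := Q.chain_eight
  have chainR := R.chain_eight
  have hQ₆ : Q 6 = 0 := Q.eq_zero 6 (by lia)
  have hsize : (P.size = 4 ∧ R.size = 7) ∨ (P.size = 4 ∧ 8 ≤ R.size) ∨ P.size = 5 := by lia
  rcases hsize with hsize | hsize | hsize
  · linarith [P.eq_zero 5 (by lia), R.eq_zero 8 (by lia), h.add_add_le 3 5 7, h.add_add_le 4 5 6]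
  · linarith [P.eq_zero 5 (by lia), h.add_add_le 2 5 8, h.add_add_le 3 5 7, h.add_add_le 4 5 6]
  · linarith [P.eq_zero 6 (by lia), h.add_add_le 4 5 6, h.add_add_le 5 4 6]

end SumBound

end Profile

lemma sizes_of_five_mul_sum_lt {s t r : ℕ} (hst : s ≤ t) (htr : t ≤ r) (hr : r ≤ 8)
    (h : 5 * (s + t + r) < s * t + t * r + r * s) :
    (2 ≤ s ∧ 7 ≤ t) ∨ (3 ≤ s ∧ t = 6 ∧ 10 ≤ s + r) ∨ (4 ≤ s ∧ t = 5 ∧ 11 ≤ s + r) := by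
  have ht : t ≤ 8 := htr.trans hr
  interval_cases t <;> interval_cases r <;> lia

namespace Profile.Compatible

variable {P Q R : Profile 8}

lemma total_le_fifteen (h : Compatible P Q R) (hPQ : P.size ≤ Q.size) (hQR : Q.size ≤ R.size)
    (hsizes : 5 * (P.size + Q.size + R.size) <
      P.size * Q.size + Q.size * R.size + R.size * P.size) :
    P.total + Q.total + R.total ≤ 15 := by
  rcases sizes_of_five_mul_sum_lt hPQ hQR R.size_le hsizes with
    ⟨hP, hQ⟩ | ⟨hP, hQ, hPR⟩ | ⟨hP, hQ, hPR⟩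
  · exact h.total_le_of_seven_le hP hQ (hQ.trans hQR)
  · exact h.total_le_of_size_eq_six hP hPQ hQ hQR hPR
  · exact h.total_le_of_size_eq_five hP hPQ hQ hPR

lemma quadratic_le (h : Compatible P Q R) :
    P.total * Q.total + Q.total * R.total + R.total * P.total ≤
      5 * (P.total + Q.total + R.total) := by
  wlog hPQ : P.size ≤ Q.size generalizing P Q R
  · linarith [this h.swap_left (by lia)]
  wlog hQR : Q.size ≤ R.size generalizing P Q R
  · rcases le_total P.size R.size with hPR | hRP
    · linarith [this h.swap_right hPR (by lia)]
    · linarith [this h.swap_right.swap_left hRP hPQ]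
  by_contra! hlt
  have hsizes := mul_sum_lt_mono P.total_nonneg Q.total_nonneg R.total_nonneg
    P.total_le_size Q.total_le_size R.total_le_size hlt
  have hsum := h.total_le_fifteen hPQ hQR (by exact_mod_cast hsizes)
  exact hlt.not_ge <| mul_add_mul_add_mul_le_of_sum_le P.total_nonneg Q.total_nonneg R.total_nonneg
    (by linarith)

end Profile.Compatible

/-- Proposition: let `f₁, f₂, f₃ : (ℤ/15ℤ)* → [0,1]` with `Fᵢ = ∑ fᵢ` satisfying
`F₁F₂ + F₂F₃ + F₃F₁ > 5(F₁ + F₂ + F₃)`. Then every `x ∈ ℤ/15ℤ` is `a₁ + a₂ + a₃` with the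
`aᵢ` units, `f₁(a₁)f₂(a₂)f₃(a₃) > 0` and `f₁(a₁) + f₂(a₂) + f₃(a₃) > 3/2`. -/
theorem stmt13 (f₁ f₂ f₃ : (ZMod 15)ˣ → ℝ)
    (h₁ : ∀ x, f₁ x ∈ Set.Icc (0 : ℝ) 1)
    (h₂ : ∀ x, f₂ x ∈ Set.Icc (0 : ℝ) 1)
    (h₃ : ∀ x, f₃ x ∈ Set.Icc (0 : ℝ) 1)
    (F₁ F₂ F₃ : ℝ)
    (hF₁ : F₁ = ∑ x : (ZMod 15)ˣ, f₁ x)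
    (hF₂ : F₂ = ∑ x : (ZMod 15)ˣ, f₂ x)
    (hF₃ : F₃ = ∑ x : (ZMod 15)ˣ, f₃ x)
    (hcond : F₁ * F₂ + F₂ * F₃ + F₃ * F₁ > 5 * (F₁ + F₂ + F₃)) :
    ∀ x : ZMod 15, ∃ a₁ a₂ a₃ : (ZMod 15)ˣ,
      x = (a₁ : ZMod 15) + (a₂ : ZMod 15) + (a₃ : ZMod 15) ∧
      f₁ a₁ * f₂ a₂ * f₃ a₃ > 0 ∧ f₁ a₁ + f₂ a₂ + f₃ a₃ > 3 / 2 := by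
  intro x
  by_contra! hno
  have hcard : Fintype.card (ZMod 15)ˣ ≤ 8 := by rw [ZMod.card_units_eq_totient]; decide
  obtain ⟨P, hP, levelP⟩ := exists_profile hcard h₁
  obtain ⟨Q, hQ, levelQ⟩ := exists_profile hcard h₂
  obtain ⟨R, hR, levelR⟩ := exists_profile hcard h₃
  have hcompat : P.Compatible Q R := by
    intro i j k hijk hi hj hk
    obtain ⟨A, rfl, hA⟩ := levelP i hi
    obtain ⟨B, rfl, hB⟩ := levelQ j hj
    obtain ⟨C, rfl, hC⟩ := levelR k hk
    obtain ⟨a, ha, b, hb, c, hc, hx⟩ := exists_units_add_add_eq hijk x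
    have hpos : 0 < f₁ a * f₂ b * f₃ c :=
      mul_pos (mul_pos (hA a ha).1 (hB b hb).1) (hC c hc).1
    linarith [hno a b c hx hpos, (hA a ha).2, (hB b hb).2, (hC c hc).2]
  have hle := hcompat.quadratic_le
  rw [hP, hQ, hR, ← hF₁, ← hF₂, ← hF₃] at hle
  exact hle.not_gt hcond
end

section
/- For every θ > 0 there exist N(θ) and c(θ) > 0 such that the following holds for every prime N ≥ N(θ). Let X₁, X₂, X₃ ⊆ Z/NZ and set θᵢ = |Xᵢ|/N. Suppose min(θ₁, θ₂, θ₃, θ₁ + θ₂ + θ₃ − 1) ≥ θ. Then for every x ∈ Z/NZ there are at least c(θ)·N² triples (x₁, x₂, x₃) with xᵢ ∈ Xᵢ and x = x₁ + x₂ + x₃. -/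
/-!
Write `r(z)` for the number of representations `z = a + b` with `a ∈ X₁` and `b ∈ X₂`. Pollard's
theorem bounds `∑ z, min t (r z)` below by `t * min N (|X₁| + |X₂| - t)`. At most `t * (N - |X₃|)`
of this sum comes from `z` outside `x - X₃`, and what is left counts distinct representations
`x = x₁ + x₂ + x₃`. Taking `t` about `θ * N / 2` leaves at least a constant times `θ² * N²`.

Pollard's theorem is proved by induction on `|B|`: translate `B` so that it meets `A` without being
contained in it, then pass from `(A, B)` to `(A ∪ B, A ∩ B)` and, when `A ∩ B` has fewer than `t`
elements, also to `(A \ B, B \ A)`. Cauchy–Davenport provides the translate.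
-/

section Convolution

open Finset
open scoped Pointwise

variable {G : Type*} [DecidableEq G]

section AddGroup

variable [AddGroup G] {A A' B B' : Finset G}

theorem addConvolution_mono_right (h : B' ⊆ B) (x : G) :
    A.addConvolution B' x ≤ A.addConvolution B x :=
  card_le_card (filter_subset_filter _ (product_subset_product_right h))

theorem addConvolution_union_left (h : Disjoint A A') (B : Finset G) (x : G) :
    (A ∪ A').addConvolution B x = A.addConvolution B x + A'.addConvolution B x := by
  unfold addConvolution
  rw [union_product, filter_union,
    card_union_of_disjoint (disjoint_filter_filter (disjoint_product.2 (.inl h)))]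

theorem addConvolution_union_right (A : Finset G) (h : Disjoint B B') (x : G) :
    A.addConvolution (B ∪ B') x = A.addConvolution B x + A.addConvolution B' x := by
  unfold addConvolution
  rw [product_union, filter_union,
    card_union_of_disjoint (disjoint_filter_filter (disjoint_product.2 (.inr h)))]

theorem card_filter_add_add_eq_sum_addConvolution (A B C : Finset G) (x : G) :
    #{p ∈ A ×ˢ B ×ˢ C | p.1 + p.2.1 + p.2.2 = x} = ∑ c ∈ C, A.addConvolution B (x - c) := by
  simp only [addConvolution, card_filter, sum_product, eq_sub_iff_add_eq]
  rw [sum_comm (s := C)]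
  exact sum_congr rfl fun a _ => sum_comm

theorem exists_vadd_inter_nonempty_sdiff_nonempty (hA : A.Nonempty) (hB : 1 < #B)
    (hmin : (#A : ℕ∞) < AddMonoid.minOrder G) :
    ∃ g : G, (A ∩ (g +ᵥ B)).Nonempty ∧ ((g +ᵥ B) \ A).Nonempty := by
  obtain ⟨b, hb⟩ := card_pos.1 (zero_lt_one.trans hB)
  by_contra! hsub
  have hadd : A + (-b +ᵥ B) ⊆ A := by
    refine add_subset_iff.2 fun a ha y hy => ?_
    have hmeet : a ∈ A ∩ ((a + -b) +ᵥ B) :=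
      mem_inter.2 ⟨ha, mem_vadd_finset.2 ⟨b, hb, by simp⟩⟩
    refine sdiff_eq_empty_iff_subset.1 (hsub (a + -b) ⟨a, hmeet⟩) ?_
    rw [← vadd_vadd]
    exact vadd_mem_vadd_finset hy
  have hcd : min (AddMonoid.minOrder G) ↑(#A + #B - 1) ≤ (#A : ℕ∞) := by
    simpa only [card_vadd_finset] using
      (cauchy_davenport_minOrder_add hA (card_pos.1 (zero_lt_one.trans hB)).vadd_finset).trans
        (Nat.cast_le.2 (card_le_card hadd))
  rcases min_le_iff.1 hcd with hle | hle
  · exact hle.not_gt hmin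
  · have := Nat.cast_le.1 hle
    omega

variable [Fintype G]

theorem sum_addConvolution (A B : Finset G) : ∑ x, A.addConvolution B x = #A * #B := by
  rw [← card_product]
  exact (card_eq_sum_card_fiberwise fun _ _ => mem_univ _).symm

theorem mul_card_le_sum_min_addConvolution (A : Finset G) {t : ℕ} (ht : t ≤ #B) :
    t * #A ≤ ∑ x, min t (A.addConvolution B x) := by
  obtain ⟨B', hB', rfl⟩ := exists_subset_card_eq ht
  rw [mul_comm, ← sum_addConvolution]
  gcongr with x
  exact le_min addConvolution_le_card_right (addConvolution_mono_right hB' x)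

theorem sum_min_le_sum_sub_add_mul_card_compl (f : G → ℕ) (C : Finset G) (x : G) (t : ℕ) :
    ∑ z, min t (f z) ≤ ∑ c ∈ C, f (x - c) + t * #Cᶜ := by
  rw [← Equiv.sum_comp (Equiv.subLeft x), ← sum_add_sum_compl C, mul_comm, ← smul_eq_mul]
  exact add_le_add (sum_le_sum fun c _ => min_le_right _ _)
    (sum_le_card_nsmul _ _ _ fun c _ => min_le_left _ _)

end AddGroup

section AddCommGroup

variable [AddCommGroup G] {A B : Finset G}

theorem addConvolution_comm (A B : Finset G) : A.addConvolution B = B.addConvolution A :=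
  funext fun x => card_equiv (Equiv.prodComm G G) (by simp [and_comm, add_comm])

theorem addConvolution_eq_union_inter_add_sdiff_sdiff (A B : Finset G) (x : G) :
    A.addConvolution B x =
      (A ∪ B).addConvolution (A ∩ B) x + (A \ B).addConvolution (B \ A) x := by
  have hB : A.addConvolution B x =
      A.addConvolution (A ∩ B) x + A.addConvolution (B \ A) x := by
    rw [← addConvolution_union_right A (disjoint_sdiff.mono_left inter_subset_left),
      union_comm, inter_comm, sdiff_union_inter]
  have hA : A.addConvolution (B \ A) x =
      (A ∩ B).addConvolution (B \ A) x + (A \ B).addConvolution (B \ A) x := by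
    rw [← addConvolution_union_left (disjoint_sdiff.mono_left inter_subset_right),
      union_comm, sdiff_union_inter]
  have hAB : (A ∪ B).addConvolution (A ∩ B) x =
      A.addConvolution (A ∩ B) x + (A ∩ B).addConvolution (B \ A) x := by
    rw [← union_sdiff_self_eq_union, addConvolution_union_left disjoint_sdiff,
      addConvolution_comm (B \ A)]
  rw [hB, hA, hAB, add_assoc]

variable [Fintype G]

theorem sum_comp_addConvolution_vadd {M : Type*} [AddCommMonoid M] (f : ℕ → M)
    (A B : Finset G) (g : G) :
    ∑ x, f (A.addConvolution (g +ᵥ B) x) = ∑ x, f (A.addConvolution B x) := by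
  rw [← Equiv.sum_comp (Equiv.addRight (-g)) fun x => f (A.addConvolution B x)]
  simp only [← op_vadd_eq_vadd, addConvolution_op_vadd_eq_addConvolution_add_neg,
    Equiv.coe_addRight]

theorem sum_min_addConvolution_union_inter_le (A B : Finset G) (t : ℕ) :
    ∑ x, min t ((A ∪ B).addConvolution (A ∩ B) x) ≤ ∑ x, min t (A.addConvolution B x) := by
  gcongr with x
  rw [addConvolution_eq_union_inter_add_sdiff_sdiff A B]
  exact Nat.le_add_right _ _

theorem card_union_mul_card_inter_add_sum_min_addConvolution_sdiff_le {t : ℕ} (ht : #(A ∩ B) ≤ t) :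
    #(A ∪ B) * #(A ∩ B) + ∑ x, min (t - #(A ∩ B)) ((A \ B).addConvolution (B \ A) x) ≤
      ∑ x, min t (A.addConvolution B x) := by
  rw [← sum_addConvolution, ← sum_add_distrib]
  gcongr with x
  have hle : (A ∪ B).addConvolution (A ∩ B) x ≤ #(A ∩ B) := addConvolution_le_card_right
  rw [addConvolution_eq_union_inter_add_sdiff_sdiff A B]
  omega

/-- The classical form is `n = min (minOrder G) (#A + #B - t)`. Leaving `n` free lets the induction
pass to `n - #(A ∩ B)` without knowing which term attains the minimum. -/
theorem pollard_minOrder {n t : ℕ} (hn : (n : ℕ∞) ≤ AddMonoid.minOrder G)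
    (hA : t ≤ #A) (hB : t ≤ #B) (hnt : n + t ≤ #A + #B) :
    t * n ≤ ∑ x, min t (A.addConvolution B x) := by
  induction hk : #B using Nat.strong_induction_on generalizing A B n t with
  | _ k ih =>
  subst hk
  rcases le_or_gt n #A with hnA | hAn
  · exact (Nat.mul_le_mul_left t hnA).trans (mul_card_le_sum_min_addConvolution A hB)
  rcases t.eq_zero_or_pos with rfl | ht
  · simp
  obtain ⟨g, hinter, hsdiff⟩ := exists_vadd_inter_nonempty_sdiff_nonempty
    (card_pos.1 (ht.trans_le hA)) (show 1 < #B by omega) ((Nat.cast_lt.2 hAn).trans_le hn)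
  rw [← sum_comp_addConvolution_vadd (min t) A B g]
  rw [← card_vadd_finset g B] at hB hnt ih
  generalize g +ᵥ B = C at *
  have hinter_pos := hinter.card_pos
  have hsdiff_pos := hsdiff.card_pos
  have hunion := card_union_add_card_inter A C
  have hA_split := card_sdiff_add_card_inter A C
  have hC_split := card_sdiff_add_card_inter C A
  rw [inter_comm C A] at hC_split
  rcases le_or_gt t #(A ∩ C) with hti | hit
  · exact (ih #(A ∩ C) (by omega) hn (by omega) hti (by omega) rfl).trans
      (sum_min_addConvolution_union_inter_le A C t)
  · have hrec := ih #(C \ A) (by omega) (A := A \ C) (n := n - #(A ∩ C)) (t := t - #(A ∩ C))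
      ((Nat.cast_le.2 (Nat.sub_le _ _)).trans hn) (by omega) (by omega) (by omega) rfl
    calc t * n ≤ #(A ∪ C) * #(A ∩ C) + (t - #(A ∩ C)) * (n - #(A ∩ C)) := by
          obtain ⟨s, rfl⟩ := Nat.exists_eq_add_of_le hit.le
          obtain ⟨m, rfl⟩ := Nat.exists_eq_add_of_le (show #(A ∩ C) ≤ n by omega)
          have : #(A ∩ C) + m + s ≤ #(A ∪ C) := by omega
          simp only [Nat.add_sub_cancel_left]
          nlinarith
      _ ≤ #(A ∪ C) * #(A ∩ C) +
          ∑ x, min (t - #(A ∩ C)) ((A \ C).addConvolution (C \ A) x) :=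
        Nat.add_le_add_left hrec _
      _ ≤ ∑ x, min t (A.addConvolution C x) :=
        card_union_mul_card_inter_add_sum_min_addConvolution_sdiff_le hit.le

theorem mul_le_card_filter_add_add_eq {A B C : Finset G} {s t : ℕ}
    (hmin : ((#Cᶜ + s : ℕ) : ℕ∞) ≤ AddMonoid.minOrder G) (hA : t ≤ #A) (hB : t ≤ #B)
    (hcard : #Cᶜ + s + t ≤ #A + #B) (x : G) :
    t * s ≤ #{p ∈ A ×ˢ B ×ˢ C | p.1 + p.2.1 + p.2.2 = x} := by
  have hpollard := pollard_minOrder hmin hA hB hcard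
  have hupper := sum_min_le_sum_sub_add_mul_card_compl (A.addConvolution B) C x t
  rw [card_filter_add_add_eq_sum_addConvolution]
  linarith

end AddCommGroup

end Convolution

theorem mul_le_card_filter_add_add_eq_of_prime {N : ℕ} [NeZero N] (hN : N.Prime)
    {A B C : Finset (ZMod N)} {s t : ℕ} (hA : t ≤ A.card) (hB : t ≤ B.card) (hC : s ≤ C.card)
    (hcard : N + s + t ≤ A.card + B.card + C.card) (x : ZMod N) :
    t * s ≤ ((A ×ˢ B ×ˢ C).filter
      (fun p : ZMod N × ZMod N × ZMod N => p.1 + p.2.1 + p.2.2 = x)).card := by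
  have hcompl : C.card + Cᶜ.card = N := by rw [Finset.card_add_card_compl, ZMod.card]
  refine mul_le_card_filter_add_add_eq ?_ hA hB (by omega) x
  rw [ZMod.minOrder_of_prime hN, Nat.cast_le]
  omega

/-- Quantitative Cauchy–Davenport-type lemma: for every `θ > 0` there are `N(θ)` and
`c(θ) > 0` such that for every prime `N ≥ N(θ)` and `X₁, X₂, X₃ ⊆ ℤ/Nℤ` with
`min(θ₁, θ₂, θ₃, θ₁ + θ₂ + θ₃ - 1) ≥ θ` (where `θᵢ = |Xᵢ|/N`), every `x ∈ ℤ/Nℤ` has at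
least `c(θ)N²` representations `x = x₁ + x₂ + x₃` with `xᵢ ∈ Xᵢ`. -/
theorem stmt17 (θ : ℝ) (hθ : 0 < θ) :
    ∃ N₀ : ℕ, ∃ c : ℝ, 0 < c ∧
      ∀ (N : ℕ) [NeZero N], N.Prime → N₀ ≤ N →
        ∀ X₁ X₂ X₃ : Finset (ZMod N),
          min ((X₁.card : ℝ) / N)
            (min ((X₂.card : ℝ) / N)
              (min ((X₃.card : ℝ) / N)
                ((X₁.card : ℝ) / N + (X₂.card : ℝ) / N + (X₃.card : ℝ) / N - 1))) ≥ θ →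
          ∀ x : ZMod N,
            c * (N : ℝ) ^ 2 ≤
              (((X₁ ×ˢ X₂ ×ˢ X₃).filter
                (fun p : ZMod N × ZMod N × ZMod N => p.1 + p.2.1 + p.2.2 = x)).card : ℝ) := by
  obtain ⟨N₀, hN₀⟩ := exists_nat_ge (4 / θ)
  refine ⟨N₀, θ ^ 2 / 16, by positivity, fun N _ hN hNN X₁ X₂ X₃ hmin x => ?_⟩
  have hNpos : (0 : ℝ) < N := by exact_mod_cast hN.pos
  obtain ⟨h₁, h₂, h₃, hsum⟩ := by simpa only [ge_iff_le, le_min_iff] using hmin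
  rw [← add_div, ← add_div, div_sub_one hNpos.ne'] at hsum
  rw [le_div_iff₀ hNpos] at h₁ h₂ h₃ hsum
  have hlarge : 4 ≤ N * θ := (div_le_iff₀ hθ).1 (hN₀.trans (by exact_mod_cast hNN))
  set t := ⌊θ * N / 2⌋₊
  have ht_le : (t : ℝ) ≤ θ * N / 2 := Nat.floor_le (by positivity)
  have hle_t : θ * N / 4 ≤ t := by linarith [Nat.lt_floor_add_one (θ * N / 2)]
  have hcount : t * t ≤ _ := mul_le_card_filter_add_add_eq_of_prime hN
    (A := X₁) (B := X₂) (C := X₃) (by rify; linarith) (by rify; linarith) (by rify; linarith)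
    (by rify; linarith) x
  calc θ ^ 2 / 16 * (N : ℝ) ^ 2 = θ * N / 4 * (θ * N / 4) := by ring
    _ ≤ t * t := by gcongr
    _ ≤ _ := by exact_mod_cast hcount
end
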